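/- Let k ≥ 2 be an integer and j ∈ {1,…,k−1}, and let ω = ω(n) be any function tending to infinity as n → ∞. Then with high probability, ((j+1)·log n + log log n − ω)·(k−j)!/((k−j+1)·n^{k−j}) < p_{M_j} < ((j+1)·log n + log log n + ω)·(k−j)!/((k−j+1)·n^{k−j}). -/

import Mathlib

open MeasureTheory Filter

attribute [local instance] Classical.propDecidable

namespace RSC

variable {V : Type*}

/-- `A` is an `i`-dimensional simplex of the complex `G`. -/
def IsSimplex (G : Set (Finset V)) (i : ℕ) (A : Finset V) : Prop :=
  A ∈ G ∧ A.card = i + 1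

/-- A `k`-dimensional simplicial complex on vertex set `V`. -/
structure IsKComplex (G : Set (Finset V)) (k : ℕ) : Prop where
  down : ∀ A ∈ G, ∀ B, B ⊆ A → B.Nonempty → B ∈ G
  singletons : ∀ v : V, ({v} : Finset V) ∈ G
  dim : ∀ A ∈ G, A.card ≤ k + 1

/-- `i`-cochains with `F₂`-coefficients. -/
abbrev Cochain (G : Set (Finset V)) (i : ℕ) : Type _ :=
  {A : Finset V // IsSimplex G i A} → ZMod 2

/-- The coboundary map `δ^i : C^i(G) → C^{i+1}(G)`. -/
noncomputable def coboundary (G : Set (Finset V)) (i : ℕ) :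
    Cochain G i →ₗ[ZMod 2] Cochain G (i + 1) where
  toFun f := fun σ => ∑ τ ∈ Finset.powersetCard (i + 1) (σ : Finset V),
      if h : IsSimplex G i τ then f ⟨τ, h⟩ else 0
  map_add' f g := by
    funext σ
    simp only [Pi.add_apply, ← Finset.sum_add_distrib]
    refine Finset.sum_congr rfl fun τ _ => ?_
    by_cases h : IsSimplex G i τ <;> simp [h]
  map_smul' c f := by
    funext σ
    simp only [Pi.smul_apply, RingHom.id_apply, Finset.smul_sum]
    refine Finset.sum_congr rfl fun τ _ => ?_
    by_cases h : IsSimplex G i τ <;> simp [h]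

/-- The submodule of `i`-cocycles. -/
noncomputable def cocycles (G : Set (Finset V)) (i : ℕ) : Submodule (ZMod 2) (Cochain G i) :=
  LinearMap.ker (coboundary G i)

/-- The submodule of `i`-coboundaries (`δ^{-1}` is the zero map). -/
noncomputable def coboundaries (G : Set (Finset V)) : (i : ℕ) → Submodule (ZMod 2) (Cochain G i)
  | 0 => ⊥
  | (i + 1) => LinearMap.range (coboundary G i)

/-- The `i`-th cohomology group `H^i(G;F₂) = ker δ^i / im δ^{i-1}`. -/
noncomputable abbrev cohomology (G : Set (Finset V)) (i : ℕ) :=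
  (cocycles G i) ⧸ ((coboundaries G i).comap (cocycles G i).subtype)

/-- `F₂`-cohomological `j`-connectedness: `H^0 ≅ F₂` and `H^i = 0` for `1 ≤ i ≤ j`. -/
def CohomConnected (G : Set (Finset V)) (j : ℕ) : Prop :=
  Nonempty (cohomology G 0 ≃ₗ[ZMod 2] ZMod 2) ∧
    ∀ i, 1 ≤ i → i ≤ j → Subsingleton (cohomology G i)

/-- The `j`-flower in `K` with centre `C`: the set of petals `C ∪ {w}`, `w ∈ K \ C`. -/
def Flower [DecidableEq V] (K C : Finset V) : Set (Finset V) :=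
  {P | ∃ w ∈ K \ C, P = insert w C}

/-- A copy of `M_j^-`: a `k`-simplex `K` together with a `(j-1)`-simplex `C ⊆ K` such that
each petal of the flower `F(K,C)` is contained in no `k`-simplex other than `K`. -/
def IsMjMinus [DecidableEq V] (G : Set (Finset V)) (k j : ℕ) (K C : Finset V) : Prop :=
  IsSimplex G k K ∧ C ∈ G ∧ C.card = j ∧ C ⊆ K ∧
    ∀ P ∈ Flower K C, ∀ K', IsSimplex G k K' → P ⊆ K' → K' = K

/-- A `j`-cycle: every `(j-1)`-simplex lies in an even number of members of `J`. -/
def IsCycle (G : Set (Finset V)) (j : ℕ) (J : Finset (Finset V)) : Prop :=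
  (∀ σ ∈ J, IsSimplex G j σ) ∧
    ∀ τ : Finset V, τ.card = j → Even (J.filter (fun σ => τ ⊆ σ)).card

/-- A copy of `M_j`. -/
def IsMj [DecidableEq V] (G : Set (Finset V)) (k j : ℕ) (K C : Finset V)
    (J : Finset (Finset V)) : Prop :=
  IsMjMinus G k j K C ∧ IsCycle G j J ∧ ∃! P : Finset V, P ∈ J ∧ P ∈ Flower K C

/-- A `j`-shell: a `(j+2)`-set all of whose `(j+1)`-subsets are `j`-simplices. -/
def IsShell (G : Set (Finset V)) (j : ℕ) (A : Finset V) : Prop :=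
  A.card = j + 2 ∧ ∀ τ ⊆ A, τ.card = j + 1 → τ ∈ G

/-- A copy of `M_j^*`. -/
def IsMjStar [DecidableEq V] (G : Set (Finset V)) (k j : ℕ) (K C : Finset V) (w a : V) : Prop :=
  IsMjMinus G k j K C ∧ w ∈ K \ C ∧ a ∉ K ∧ IsShell G j (insert a (insert w C))

/-- The support of a cochain. -/
def cochainSupport {G : Set (Finset V)} {i : ℕ} (f : Cochain G i) : Set (Finset V) :=
  {A | ∃ h : IsSimplex G i A, f ⟨A, h⟩ = 1}

/-- A cochain arising from a copy of `M_j^-`: its support is the flower `F(K,C)`. -/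
def ArisesFrom [DecidableEq V] (G : Set (Finset V)) (k j : ℕ) (f : Cochain G j)
    (K C : Finset V) : Prop :=
  IsMjMinus G k j K C ∧ cochainSupport f = Flower K C

/-- A `j`-cocycle generated by copies of `M_j^-`: it differs by a `j`-coboundary from a sum
of `j`-cocycles arising from copies of `M_j^-`. -/
def GeneratedByMjMinus [DecidableEq V] (G : Set (Finset V)) (k j : ℕ) (f : Cochain G j) : Prop :=
  ∃ (m : ℕ) (fs : Fin m → Cochain G j),
    (∀ i, ∃ K C, ArisesFrom G k j (fs i) K C) ∧
      f - (∑ i, fs i) ∈ coboundaries G j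

/-- Membership in `N_G`: a `j`-cocycle not generated by copies of `M_j^-`. -/
def InNG [DecidableEq V] (G : Set (Finset V)) (k j : ℕ) (f : Cochain G j) : Prop :=
  f ∈ cocycles G j ∧ ¬ GeneratedByMjMinus G k j f

/-- Traversability: the transitive closure of "lying in a common `k`-simplex" is `S × S`. -/
def Traversable (G : Set (Finset V)) (k : ℕ) (S : Set (Finset V)) : Prop :=
  ∀ σ₁ ∈ S, ∀ σ₂ ∈ S,
    Relation.TransGen
      (fun a b => a ∈ S ∧ b ∈ S ∧ ∃ K, IsSimplex G k K ∧ a ⊆ K ∧ b ⊆ K) σ₁ σ₂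

/-- A local obstacle: a `k`-simplex containing at least `k-j+1` many `j`-simplices,
each lying in no other `k`-simplex. -/
def IsLocalObstacle (G : Set (Finset V)) (k j : ℕ) (K : Finset V) : Prop :=
  IsSimplex G k K ∧
    k - j + 1 ≤ {σ : Finset V | IsSimplex G j σ ∧ σ ⊆ K ∧
      ∀ K', IsSimplex G k K' → σ ⊆ K' → K' = K}.ncard

/-- The random complex `G_p` given birth times `t`: all singletons together with all
non-empty subsets of `(k+1)`-sets with birth time at most `p`. -/
def complexAt (k n : ℕ) (t : Finset (Fin n) → ℝ) (p : ℝ) : Set (Finset (Fin n)) :=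
  {A | (∃ v, A = {v}) ∨
    (A.Nonempty ∧ ∃ K : Finset (Fin n), K.card = k + 1 ∧ t K ≤ p ∧ A ⊆ K)}

/-- The distribution of birth times: i.i.d. uniform on `[0,1]`. -/
noncomputable def birthMeasure (n : ℕ) : Measure (Finset (Fin n) → ℝ) :=
  Measure.pi fun _ => volume.restrict (Set.Icc (0 : ℝ) 1)

/-- `p_{M_j}`: the supremum of the probabilities `p ∈ [0,1]` at which `G_p` contains
a copy of `M_j`. -/
noncomputable def pMj (k j n : ℕ) (t : Finset (Fin n) → ℝ) : ℝ :=
  sSup {p : ℝ | p ∈ Set.Icc (0 : ℝ) 1 ∧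
    ∃ K C J, IsMj (complexAt k n t p) k j K C J}

/-- The threshold `p_j`. -/
noncomputable def pjThreshold (k j n : ℕ) : ℝ :=
  ((j + 1 : ℝ) * Real.log n + Real.log (Real.log n)) * (Nat.factorial (k - j)) /
    (((k - j + 1 : ℕ) : ℝ) * (n : ℝ) ^ (k - j))

/-- `p_j^-`. -/
noncomputable def pjMinus (k j n : ℕ) : ℝ :=
  (1 - 1 / Real.sqrt (Real.log n)) * ((j + 1 : ℝ) * Real.log n) * (Nat.factorial (k - j)) /
    (((k - j + 1 : ℕ) : ℝ) * (n : ℝ) ^ (k - j))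

/-- `p_{j-1}^-`. -/
noncomputable def pjPrevMinus (k j n : ℕ) : ℝ :=
  (1 - 1 / Real.sqrt (Real.log n)) * ((j : ℝ) * Real.log n) * (Nat.factorial (k - j + 1)) /
    (((k - j + 2 : ℕ) : ℝ) * (n : ℝ) ^ (k - j + 1))

/-- `p_j^{(1)}`. -/
noncomputable def pjOne (k j n : ℕ) : ℝ :=
  1 / (10 * ((j : ℝ) + 1) * (Nat.choose (k + 1) (j + 1)) * (n : ℝ) ^ (k - j))

/-- The number of copies of `M_j^-` in `G`. -/
noncomputable def countMjMinus (k j : ℕ) {n : ℕ} (G : Set (Finset (Fin n))) : ℕ :=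
  {x : Finset (Fin n) × Finset (Fin n) | IsMjMinus G k j x.1 x.2}.ncard

/-- The number of copies of `M_j^*` in `G`. -/
noncomputable def countMjStar (k j : ℕ) {n : ℕ} (G : Set (Finset (Fin n))) : ℕ :=
  {x : Finset (Fin n) × Finset (Fin n) × Fin n × Fin n |
    IsMjStar G k j x.1 x.2.1 x.2.2.1 x.2.2.2}.ncard

/-! ### Generic probability lemmas -/

/-- Box event: coordinates in `A` are at most `x`, coordinates in `B` exceed `y`. -/
def box {ι : Type*} (A B : Finset ι) (x y : ℝ) : Set (ι → ℝ) :=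
  {t | (∀ i ∈ A, t i ≤ x) ∧ ∀ i ∈ B, y < t i}

lemma box_eq_pi {ι : Type*} (A B : Finset ι) (x y : ℝ) (h : Disjoint A B) :
    box A B x y = Set.pi Set.univ
      (fun i => if i ∈ A then Set.Iic x else if i ∈ B then Set.Ioi y else Set.univ) := by
  ext t
  simp only [box, Set.mem_ofPred_eq, Set.mem_pi, Set.mem_univ, true_imp_iff]
  constructor
  · rintro ⟨h1, h2⟩ i
    by_cases hA : i ∈ A
    · simpa [hA] using h1 i hA
    · by_cases hB : i ∈ B
      · simpa [hA, hB] using h2 i hB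
      · simp [hA, hB]
  · intro h1
    refine ⟨fun i hi => by simpa [hi] using h1 i, fun i hi => ?_⟩
    have hA : i ∉ A := fun hA => (Finset.disjoint_left.mp h hA hi)
    simpa [hi, hA] using h1 i

lemma measurableSet_box {ι : Type*} [Fintype ι] (A B : Finset ι) (x y : ℝ) :
    MeasurableSet (box A B x y) := by
  have : box A B x y = (⋂ i ∈ A, (fun t : ι → ℝ => t i) ⁻¹' Set.Iic x) ∩
      ⋂ i ∈ B, (fun t : ι → ℝ => t i) ⁻¹' Set.Ioi y := by
    ext t; simp [box]
  rw [this]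
  refine MeasurableSet.inter ?_ ?_
  · exact Finset.measurableSet_biInter _ fun i _ => measurable_pi_apply i measurableSet_Iic
  · exact Finset.measurableSet_biInter _ fun i _ => measurable_pi_apply i measurableSet_Ioi

instance isProb_unif : IsProbabilityMeasure (volume.restrict (Set.Icc (0 : ℝ) 1)) :=
  ⟨by simp⟩

instance isProb_birth (n : ℕ) : IsProbabilityMeasure (birthMeasure n) := by
  unfold birthMeasure; infer_instance

lemma birth_box_general (n : ℕ) (A B : Finset (Finset (Fin n))) (x y : ℝ) (h : Disjoint A B) :
    (birthMeasure n).real (box A B x y) =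
      ((volume.restrict (Set.Icc (0 : ℝ) 1)).real (Set.Iic x)) ^ A.card *
      ((volume.restrict (Set.Icc (0 : ℝ) 1)).real (Set.Ioi y)) ^ B.card := by
  rw [box_eq_pi _ _ _ _ h, birthMeasure, Measure.real, Measure.pi_pi, ENNReal.toReal_prod]
  trans ∏ i : Finset (Fin n),
      (if i ∈ A then (volume.restrict (Set.Icc (0 : ℝ) 1)).real (Set.Iic x) else 1) *
      (if i ∈ B then (volume.restrict (Set.Icc (0 : ℝ) 1)).real (Set.Ioi y) else 1)
  · refine Finset.prod_congr rfl fun i _ => ?_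
    by_cases hA : i ∈ A
    · have hB : i ∉ B := Finset.disjoint_left.mp h hA
      simp [hA, hB, Measure.real]
    · by_cases hB : i ∈ B <;> simp [hA, hB, Measure.real]
  · rw [Finset.prod_mul_distrib]
    simp [Finset.prod_ite]

lemma unif_Iic (x : ℝ) (h0 : 0 ≤ x) (h1 : x ≤ 1) :
    (volume.restrict (Set.Icc (0 : ℝ) 1)).real (Set.Iic x) = x := by
  rw [Measure.real, Measure.restrict_apply measurableSet_Iic]
  have : Set.Iic x ∩ Set.Icc 0 1 = Set.Icc 0 x := by
    ext z; simp only [Set.mem_inter_iff, Set.mem_Iic, Set.mem_Icc]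
    constructor
    · rintro ⟨a, b, c⟩; exact ⟨b, a⟩
    · rintro ⟨a, b⟩; exact ⟨b, a, b.trans h1⟩
  rw [this]; simp [h0]

lemma unif_Iic_le (x : ℝ) (h0 : 0 ≤ x) :
    (volume.restrict (Set.Icc (0 : ℝ) 1)).real (Set.Iic x) ≤ x := by
  by_cases h1 : x ≤ 1
  · exact (unif_Iic x h0 h1).le
  · exact (measureReal_le_one).trans (not_le.mp h1).le

lemma unif_Ioi (x : ℝ) (h0 : 0 ≤ x) (h1 : x ≤ 1) :
    (volume.restrict (Set.Icc (0 : ℝ) 1)).real (Set.Ioi x) = 1 - x := by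
  rw [Measure.real, Measure.restrict_apply measurableSet_Ioi]
  have : Set.Ioi x ∩ Set.Icc 0 1 = Set.Ioc x 1 := by
    ext z; simp only [Set.mem_inter_iff, Set.mem_Ioi, Set.mem_Icc, Set.mem_Ioc]
    constructor
    · rintro ⟨a, b, c⟩; exact ⟨a, c⟩
    · rintro ⟨a, b⟩; exact ⟨a, h0.trans a.le, b⟩
  rw [this]; simp [h1]

lemma unif_Ioi_le (x : ℝ) (h0 : 0 ≤ x) :
    (volume.restrict (Set.Icc (0 : ℝ) 1)).real (Set.Ioi x) ≤ Real.exp (-x) := by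
  by_cases h1 : x ≤ 1
  · rw [unif_Ioi x h0 h1]
    have := Real.add_one_le_exp (-x); linarith
  · rw [Measure.real, Measure.restrict_apply measurableSet_Ioi]
    have : Set.Ioi x ∩ Set.Icc 0 1 = ∅ := by
      ext z; simp only [Set.mem_inter_iff, Set.mem_Ioi, Set.mem_Icc, Set.mem_empty_iff_false,
        iff_false]
      rintro ⟨a, b, c⟩; linarith
    rw [this]; simp; positivity

lemma birth_box (n : ℕ) (A B : Finset (Finset (Fin n))) (p : ℝ) (h : Disjoint A B)
    (h0 : 0 ≤ p) (h1 : p ≤ 1) :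
    (birthMeasure n).real (box A B p p) = p ^ A.card * (1 - p) ^ B.card := by
  rw [birth_box_general n A B p p h, unif_Iic p h0 h1, unif_Ioi p h0 h1]

lemma birth_box_le (n : ℕ) (K : Finset (Fin n)) (B : Finset (Finset (Fin n))) (x y : ℝ)
    (h : K ∉ B) (hx : 0 ≤ x) (hy : 0 ≤ y) (m : ℕ) (hm : m ≤ B.card) :
    (birthMeasure n).real (box {K} B x y) ≤ x * Real.exp (-(y * m)) := by
  rw [birth_box_general n {K} B x y (by simpa using h)]
  simp only [Finset.card_singleton, pow_one]
  refine mul_le_mul (unif_Iic_le x hx) ?_ (by positivity) hx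
  calc _ ≤ (Real.exp (-y)) ^ B.card :=
        pow_le_pow_left₀ measureReal_nonneg (unif_Ioi_le y hy) _
    _ = Real.exp (-(y * B.card)) := by rw [← Real.exp_nat_mul]; congr 1; ring
    _ ≤ _ := by
      apply Real.exp_le_exp.mpr
      have : (m : ℝ) ≤ B.card := by exact_mod_cast hm
      nlinarith

/-- Second moment lower bound. -/
lemma second_moment {Ω I : Type*} [MeasurableSpace Ω] (μ : Measure Ω) [IsProbabilityMeasure μ]
    (s : Finset I) (E F : I → Set Ω) 
    (hF : ∀ i ∈ s, MeasurableSet (F i)) (hFE : ∀ i ∈ s, F i ⊆ E i) (m δ R : ℝ) (hm : 0 < m)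
    (h1 : (1 - δ) * m ≤ ∑ i ∈ s, μ.real (F i))
    (h2 : ∑ i ∈ s, ∑ i' ∈ s, μ.real (E i ∩ E i') ≤ m + R * m ^ 2) :
    2 * (1 - δ) - R - 1 / m ≤ μ.real (⋃ i ∈ s, F i) := by
  classical
  set U := ⋃ i ∈ s, F i with hU
  have hUm : MeasurableSet U := Finset.measurableSet_biUnion _ hF
  let Y : Ω → ℝ := fun x => ∑ i ∈ s, (F i).indicator (fun _ => (1 : ℝ)) x
  have hYint : ∫ x, Y x ∂μ = ∑ i ∈ s, μ.real (F i) := by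
    rw [integral_finsetSum]
    · refine Finset.sum_congr rfl fun i hi => ?_
      rw [integral_indicator (hF i hi)]; simp
    · exact fun i hi => (integrable_const _).indicator (hF i hi)
  have hYI : Integrable Y μ := integrable_finsetSum _
    fun i hi => (integrable_const (1 : ℝ)).indicator (hF i hi)
  have hsq : ∀ x, Y x ^ 2 = ∑ i ∈ s, ∑ i' ∈ s, (F i ∩ F i').indicator (fun _ => (1 : ℝ)) x := by
    intro x
    simp only [Y, sq, Finset.sum_mul_sum]
    refine Finset.sum_congr rfl fun i _ => Finset.sum_congr rfl fun i' _ => ?_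
    by_cases a : x ∈ F i <;> by_cases b : x ∈ F i' <;> simp [a, b]
  have hFF : ∀ i ∈ s, ∀ i' ∈ s, Integrable ((F i ∩ F i').indicator (fun _ => (1 : ℝ))) μ :=
    fun i hi i' hi' => (integrable_const (1 : ℝ)).indicator ((hF i hi).inter (hF i' hi'))
  have hY2I : Integrable (fun x => Y x ^ 2) μ := by
    simp_rw [hsq]
    exact integrable_finsetSum _ fun i hi => integrable_finsetSum _ fun i' hi' => hFF i hi i' hi'
  have hY2 : ∫ x, Y x ^ 2 ∂μ ≤ m + R * m ^ 2 := by
    refine le_trans ?_ h2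
    simp_rw [hsq]
    rw [integral_finsetSum _ fun i hi => integrable_finsetSum _ fun i' hi' => hFF i hi i' hi']
    refine Finset.sum_le_sum fun i hi => ?_
    rw [integral_finsetSum _ fun i' hi' => hFF i hi i' hi']
    refine Finset.sum_le_sum fun i' hi' => ?_
    rw [integral_indicator ((hF i hi).inter (hF i' hi'))]
    simp only [integral_const, smul_eq_mul, mul_one, measureReal_restrict_apply_univ]
    exact measureReal_mono (Set.inter_subset_inter (hFE i hi) (hFE i' hi'))
  have hpt : ∀ x, 2 / m * Y x - 1 / m ^ 2 * Y x ^ 2 ≤ U.indicator (fun _ => (1 : ℝ)) x := by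
    intro x
    by_cases hx : x ∈ U
    · simp only [hx, Set.indicator_of_mem]
      have : 0 ≤ (1 - Y x / m) ^ 2 := sq_nonneg _
      have e : (1 - Y x / m) ^ 2 = 1 - (2 / m * Y x - 1 / m ^ 2 * Y x ^ 2) := by
        field_simp; ring
      linarith
    · have : Y x = 0 := Finset.sum_eq_zero fun i hi => by
        apply Set.indicator_of_notMem
        intro h; exact hx (Set.mem_biUnion hi h)
      simp [this, hx]
  have hInt0 := integral_mono ((hYI.const_mul (2 / m)).sub (hY2I.const_mul (1 / m ^ 2)))
    ((integrable_const (1 : ℝ)).indicator hUm) hpt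
  simp only [Pi.sub_apply] at hInt0
  rw [integral_sub (hYI.const_mul (2 / m)) (hY2I.const_mul (1 / m ^ 2)), integral_const_mul,
    integral_const_mul, integral_indicator hUm, hYint] at hInt0
  simp only [integral_const, smul_eq_mul, mul_one, measureReal_restrict_apply_univ] at hInt0
  refine le_trans ?_ hInt0
  have a1 : 2 / m * ((1 - δ) * m) ≤ 2 / m * ∑ i ∈ s, μ.real (F i) :=
    mul_le_mul_of_nonneg_left h1 (by positivity)
  have a2 : 1 / m ^ 2 * ∫ x, Y x ^ 2 ∂μ ≤ 1 / m ^ 2 * (m + R * m ^ 2) :=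
    mul_le_mul_of_nonneg_left hY2 (by positivity)
  have e1 : 2 / m * ((1 - δ) * m) = 2 * (1 - δ) := by field_simp
  have e2 : 1 / m ^ 2 * (m + R * m ^ 2) = 1 / m + R := by field_simp
  linarith

/-! ### Deterministic part -/

/-- The `(k+1)`-sets other than `K` containing a petal of the flower of `(K, C)`. -/
noncomputable def nbr (k : ℕ) {n : ℕ} (K C : Finset (Fin n)) : Finset (Finset (Fin n)) :=
  Finset.univ.filter fun L => L.card = k + 1 ∧ L ≠ K ∧ ∃ w ∈ K \ C, insert w C ⊆ L

/-- The `(k+1)`-sets containing `Q`. -/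
noncomputable def ups (k : ℕ) {n : ℕ} (Q : Finset (Fin n)) : Finset (Finset (Fin n)) :=
  Finset.univ.filter fun L => L.card = k + 1 ∧ Q ⊆ L

lemma mem_nbr {k n : ℕ} {K C L : Finset (Fin n)} :
    L ∈ nbr k K C ↔ L.card = k + 1 ∧ L ≠ K ∧ ∃ w ∈ K \ C, insert w C ⊆ L := by
  simp [nbr]

lemma mem_ups {k n : ℕ} {Q L : Finset (Fin n)} :
    L ∈ ups k Q ↔ L.card = k + 1 ∧ Q ⊆ L := by
  simp [ups]

lemma isSimplex_iff {k n : ℕ} (hk : 1 ≤ k) (t : Finset (Fin n) → ℝ) (p : ℝ)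
    (K : Finset (Fin n)) :
    IsSimplex (complexAt k n t p) k K ↔ K.card = k + 1 ∧ t K ≤ p := by
  constructor
  · rintro ⟨h, hc⟩
    refine ⟨hc, ?_⟩
    rcases h with ⟨v, rfl⟩ | ⟨_, K', hK', ht, hsub⟩
    · simp at hc; omega
    · have : K = K' := Finset.eq_of_subset_of_card_le hsub (by omega)
      rw [this]; exact ht
  · rintro ⟨hc, ht⟩
    refine ⟨Or.inr ⟨?_, K, hc, ht, Finset.Subset.refl _⟩, hc⟩
    apply Finset.card_pos.mp; omega

lemma mjMinus_imp {k j n : ℕ} (hk : 1 ≤ k) (t : Finset (Fin n) → ℝ) (p : ℝ)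
    (K C : Finset (Fin n)) (h : IsMjMinus (complexAt k n t p) k j K C) :
    K.card = k + 1 ∧ C.card = j ∧ C ⊆ K ∧ t K ≤ p ∧ ∀ L ∈ nbr k K C, p < t L := by
  obtain ⟨h1, _, h3, h4, h5⟩ := h
  rw [isSimplex_iff hk] at h1
  refine ⟨h1.1, h3, h4, h1.2, fun L hL => ?_⟩
  rw [mem_nbr] at hL
  obtain ⟨hc, hne, w, hw, hsub⟩ := hL
  by_contra hle
  exact hne (h5 _ ⟨w, hw, rfl⟩ L ((isSimplex_iff hk _ _ _).mpr ⟨hc, not_lt.mp hle⟩) hsub)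

lemma cycle_even {n j : ℕ} (A τ : Finset (Fin n)) (hA : A.card = j + 2) (hτ : τ.card = j) :
    Even ((Finset.powersetCard (j + 1) A).filter (fun σ => τ ⊆ σ)).card := by
  by_cases h : τ ⊆ A
  · have : (Finset.powersetCard (j + 1) A).filter (fun σ => τ ⊆ σ) =
        (A \ τ).image (fun x => insert x τ) := by
      ext σ
      simp only [Finset.mem_filter, Finset.mem_powersetCard, Finset.mem_image, Finset.mem_sdiff]
      constructor
      · rintro ⟨⟨h1, h2⟩, h3⟩
        have h4 : (σ \ τ).card = 1 := by rw [Finset.card_sdiff_of_subset h3]; omega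
        obtain ⟨x, hx⟩ := Finset.card_eq_one.mp h4
        have hx' : x ∈ σ \ τ := by rw [hx]; simp
        rw [Finset.mem_sdiff] at hx'
        refine ⟨x, ⟨h1 hx'.1, hx'.2⟩, ?_⟩
        rw [← Finset.union_sdiff_of_subset h3, hx]
        ext y; simp
      · rintro ⟨x, ⟨hx1, hx2⟩, rfl⟩
        refine ⟨⟨?_, ?_⟩, Finset.subset_insert _ _⟩
        · exact Finset.insert_subset hx1 h
        · rw [Finset.card_insert_of_notMem hx2, hτ]
    rw [this, Finset.card_image_of_injOn, Finset.card_sdiff_of_subset h, hA, hτ]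
    · simp
    · intro x hx y hy hxy
      simp only [Finset.coe_sdiff, Set.mem_sdiff, Finset.mem_coe] at hx hy
      have : x ∈ insert y τ := by
        have h0 : insert x τ = insert y τ := hxy
        rw [← h0]; simp
      rcases Finset.mem_insert.mp this with h | h
      · exact h
      · exact absurd h hx.2
  · have : (Finset.powersetCard (j + 1) A).filter (fun σ => τ ⊆ σ) = ∅ := by
      apply Finset.filter_eq_empty_iff.mpr
      intro σ hσ hs
      exact h (hs.trans (Finset.mem_powersetCard.mp hσ).1)
    rw [this]; simp

lemma mj_of_good {k j n : ℕ} (hj : 1 ≤ j) (hk : 1 ≤ k) (t : Finset (Fin n) → ℝ) (p : ℝ)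
    (K C : Finset (Fin n)) (w a : Fin n) (hK : K.card = k + 1) (hC : C.card = j) (hCK : C ⊆ K)
    (hw : w ∈ K \ C) (ha : a ∉ K) (ht : t K ≤ p) (hn : ∀ L ∈ nbr k K C, p < t L)
    (hs : ∀ τ ⊆ insert a (insert w C), τ.card = j + 1 → a ∈ τ → ∃ L ∈ ups k τ, t L ≤ p) :
    ∃ J, IsMj (complexAt k n t p) k j K C J := by
  have hw' := Finset.mem_sdiff.mp hw
  have hwC : insert w C ⊆ K := Finset.insert_subset hw'.1 hCK
  have hc1 : (insert w C).card = j + 1 := by rw [Finset.card_insert_of_notMem hw'.2, hC]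
  have hc2 : (insert a (insert w C)).card = j + 2 := by
    rw [Finset.card_insert_of_notMem (fun h => ha (hwC h)), hc1]
  refine ⟨Finset.powersetCard (j + 1) (insert a (insert w C)), ⟨?_, ?_, hC, hCK, ?_⟩,
    ⟨?_, ?_⟩, ?_⟩
  · exact (isSimplex_iff hk _ _ _).mpr ⟨hK, ht⟩
  · exact Or.inr ⟨Finset.card_pos.mp (by omega), K, hK, ht, hCK⟩
  · rintro P ⟨v, hv, rfl⟩ K' hK' hsub
    rw [isSimplex_iff hk] at hK'
    by_contra hne
    exact absurd hK'.2 (not_le.mpr (hn K' (mem_nbr.mpr ⟨hK'.1, hne, v, hv, hsub⟩)))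
  · intro σ hσ
    rw [Finset.mem_powersetCard] at hσ
    refine ⟨Or.inr ⟨Finset.card_pos.mp (by omega), ?_⟩, hσ.2⟩
    by_cases haσ : a ∈ σ
    · obtain ⟨L, hL, hLt⟩ := hs σ hσ.1 hσ.2 haσ
      rw [mem_ups] at hL
      exact ⟨L, hL.1, hLt, hL.2⟩
    · refine ⟨K, hK, ht, fun x hx => hwC ?_⟩
      rcases Finset.mem_insert.mp (hσ.1 hx) with h | h
      · exact absurd (h ▸ hx) haσ
      · exact h
  · intro τ hτ
    have := cycle_even _ _ hc2 hτ
    convert this using 2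
    ext σ; simp only [Finset.mem_filter]
  · refine ⟨insert w C, ⟨?_, w, hw, rfl⟩, ?_⟩
    · exact Finset.mem_powersetCard.mpr ⟨Finset.subset_insert _ _, hc1⟩
    · rintro P ⟨hP, v, hv, rfl⟩
      rw [Finset.mem_powersetCard] at hP
      apply Finset.eq_of_subset_of_card_le
      · intro x hx
        rcases Finset.mem_insert.mp (hP.1 hx) with h | h
        · exfalso
          apply ha
          rw [← h]
          exact (Finset.insert_subset (Finset.mem_sdiff.mp hv).1 hCK) hx
        · exact h
      · rw [hc1, hP.2]

/-! ### Counting -/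

lemma card_ups_le {k n : ℕ} (Q : Finset (Fin n)) :
    (ups k Q).card ≤ n.choose (k + 1 - Q.card) := by
  have h : (ups k Q).card ≤ (Finset.powersetCard (k + 1 - Q.card) (Finset.univ : Finset (Fin n))).card := by
    apply Finset.card_le_card_of_injOn (fun L => L \ Q)
    · intro L hL
      have hL' := mem_ups.mp hL
      simp only [Finset.mem_coe, Finset.mem_powersetCard, Finset.subset_univ, true_and]
      rw [Finset.card_sdiff_of_subset hL'.2, hL'.1]
    · intro L hL L' hL' he
      have h1 := (mem_ups.mp hL).2
      have h2 := (mem_ups.mp hL').2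
      have he' : L \ Q = L' \ Q := he
      rw [← Finset.union_sdiff_of_subset h1, ← Finset.union_sdiff_of_subset h2, he']
  simpa using h

lemma nbr_subset {k n : ℕ} (K C : Finset (Fin n)) :
    nbr k K C ⊆ (K \ C).biUnion fun w => ups k (insert w C) := by
  intro L hL
  obtain ⟨h1, _, w, hw, hs⟩ := mem_nbr.mp hL
  exact Finset.mem_biUnion.mpr ⟨w, hw, mem_ups.mpr ⟨h1, hs⟩⟩

lemma card_nbr_le {k j n : ℕ} (K C : Finset (Fin n)) (hK : K.card = k + 1)
    (hC : C.card = j) (hCK : C ⊆ K) (hjk : j < k) :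
    (nbr k K C).card ≤ (k - j + 1) * n.choose (k - j) := by
  refine (Finset.card_le_card (nbr_subset K C)).trans ?_
  refine (Finset.card_biUnion_le_card_mul _ _ (n.choose (k - j)) ?_).trans ?_
  · intro w hw
    refine (card_ups_le _).trans ?_
    rw [Finset.card_insert_of_notMem (Finset.mem_sdiff.mp hw).2, hC]
    apply le_of_eq; congr 1; omega
  · rw [Finset.card_sdiff_of_subset hCK, hK, hC]
    apply le_of_eq; congr 1; omega

lemma le_card_nbr {k j n : ℕ} (K C : Finset (Fin n)) (hK : K.card = k + 1)
    (hC : C.card = j) (hCK : C ⊆ K) (hjk : j < k) :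
    (k - j + 1) * (n - (k + 1)).choose (k - j) ≤ (nbr k K C).card := by
  have h : ((K \ C) ×ˢ Finset.powersetCard (k - j) Kᶜ).card ≤ (nbr k K C).card := by
    apply Finset.card_le_card_of_injOn (fun x => insert x.1 C ∪ x.2)
    · rintro ⟨w, U⟩ hx
      simp only [Finset.mem_coe, Finset.mem_product, Finset.mem_powersetCard] at hx ⊢
      obtain ⟨hw, hU, hUc⟩ := hx
      have hw' := Finset.mem_sdiff.mp hw
      have hd : Disjoint (insert w C) U := by
        rw [Finset.disjoint_left]
        intro x hx hxU
        have := Finset.mem_compl.mp (hU hxU)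
        exact this (Finset.insert_subset hw'.1 hCK hx)
      rw [mem_nbr]
      refine ⟨?_, ?_, w, hw, Finset.subset_union_left⟩
      · rw [Finset.card_union_of_disjoint hd, Finset.card_insert_of_notMem hw'.2, hC, hUc]; omega
      · intro he
        obtain ⟨u, hu⟩ : U.Nonempty := Finset.card_pos.mp (by omega)
        apply Finset.mem_compl.mp (hU hu)
        rw [← he]; exact Finset.mem_union_right _ hu
    · rintro ⟨w, U⟩ hx ⟨w', U'⟩ hx' he
      simp only [Finset.mem_coe, Finset.mem_product, Finset.mem_powersetCard,
        Finset.mem_sdiff] at hx hx' he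
      obtain ⟨⟨hwK, hwC⟩, hU, hUc⟩ := hx
      obtain ⟨⟨hwK', hwC'⟩, hU', hUc'⟩ := hx'
      have key : ∀ x, (x = w ∨ x ∈ C ∨ x ∈ U) ↔ (x = w' ∨ x ∈ C ∨ x ∈ U') := by
        intro x
        have := congrArg (fun s => x ∈ s) he
        simpa [or_assoc] using this
      have hn : ∀ x ∈ U, x ∉ K := fun x hx => Finset.mem_compl.mp (hU hx)
      have hn' : ∀ x ∈ U', x ∉ K := fun x hx => Finset.mem_compl.mp (hU' hx)
      have e1 : w = w' := by
        rcases (key w).mp (Or.inl rfl) with h | h | h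
        · exact h
        · exact absurd h hwC
        · exact absurd hwK (hn' _ h)
      have e2 : U = U' := by
        ext x
        constructor
        · intro hx
          rcases (key x).mp (Or.inr (Or.inr hx)) with h | h | h
          · exact absurd (h ▸ hwK') (hn _ hx)
          · exact absurd (hCK h) (hn _ hx)
          · exact h
        · intro hx
          rcases (key x).mpr (Or.inr (Or.inr hx)) with h | h | h
          · exact absurd (h ▸ hwK) (hn' _ hx)
          · exact absurd (hCK h) (hn' _ hx)
          · exact h
      rw [e1, e2]
  rw [Finset.card_product, Finset.card_powersetCard, Finset.card_compl, Fintype.card_fin,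
    Finset.card_sdiff_of_subset hCK, hK, hC] at h
  have e : k + 1 - j = k - j + 1 := by omega
  rwa [e] at h

lemma card_inter_le {k j n : ℕ} (K C K' C' : Finset (Fin n)) (hK : K.card = k + 1)
    (hC : C.card = j) (hCK : C ⊆ K) (hK' : K'.card = k + 1)
    (hC' : C'.card = j) (hjk : j < k) (hne : K ≠ K')
    (hnot : K ∉ nbr k K' C') :
    (nbr k K C ∩ nbr k K' C').card ≤ (k + 1) ^ 2 * n ^ (k - j - 1) := by
  have hsub : nbr k K C ∩ nbr k K' C' ⊆
      ((K \ C) ×ˢ (K' \ C')).biUnion fun x => ups k (insert x.1 C ∪ insert x.2 C') := by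
    intro L hL
    rw [Finset.mem_inter, mem_nbr, mem_nbr] at hL
    obtain ⟨⟨h1, _, w, hw, hs⟩, ⟨_, _, w', hw', hs'⟩⟩ := hL
    exact Finset.mem_biUnion.mpr ⟨(w, w'), Finset.mem_product.mpr ⟨hw, hw'⟩,
      mem_ups.mpr ⟨h1, Finset.union_subset hs hs'⟩⟩
  refine (Finset.card_le_card hsub).trans ?_
  refine (Finset.card_biUnion_le_card_mul _ _ (n ^ (k - j - 1)) ?_).trans ?_
  · rintro ⟨w, w'⟩ hx
    obtain ⟨hw, hw'⟩ := Finset.mem_product.mp hx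
    simp only at hw hw'
    have hPK : insert w C ⊆ K := Finset.insert_subset (Finset.mem_sdiff.mp hw).1 hCK
    have hPc : (insert w C).card = j + 1 := by
      rw [Finset.card_insert_of_notMem (Finset.mem_sdiff.mp hw).2, hC]
    have hPc' : (insert w' C').card = j + 1 := by
      rw [Finset.card_insert_of_notMem (Finset.mem_sdiff.mp hw').2, hC']
    have hcard : j + 2 ≤ (insert w C ∪ insert w' C').card := by
      by_contra hlt
      have e1 : insert w C = insert w C ∪ insert w' C' :=
        Finset.eq_of_subset_of_card_le Finset.subset_union_left (by omega)
      have h2 : insert w' C' ⊆ insert w C := by rw [e1]; exact Finset.subset_union_right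
      exact hnot (mem_nbr.mpr ⟨hK, hne, w', hw', h2.trans hPK⟩)
    obtain ⟨Q, hQ, hQc⟩ := Finset.exists_subset_card_eq hcard
    have : ups k (insert w C ∪ insert w' C') ⊆ ups k Q := by
      intro L hL
      rw [mem_ups] at hL ⊢
      exact ⟨hL.1, hQ.trans hL.2⟩
    refine (Finset.card_le_card this).trans ((card_ups_le Q).trans ?_)
    rw [hQc]
    have e : k + 1 - (j + 2) = k - j - 1 := by omega
    rw [e]
    exact Nat.choose_le_pow _ _
  · apply Nat.mul_le_mul_right
    rw [Finset.card_product, sq]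
    exact Nat.mul_le_mul ((Finset.card_le_card Finset.sdiff_subset).trans hK.le)
      ((Finset.card_le_card Finset.sdiff_subset).trans hK'.le)

lemma le_card_ups_sdiff {k j n : ℕ} (K C τ : Finset (Fin n)) (a : Fin n) (hK : K.card = k + 1)
    (hC : C.card = j) (hCK : C ⊆ K) (hjk : j < k) (ha : a ∉ K) (haτ : a ∈ τ) (hτ : τ.card = j + 1)
    (hτK : τ ⊆ insert a K) :
    (n - (k + 2)).choose (k - j) ≤ (ups k τ \ nbr k K C).card := by
  have h : (Finset.powersetCard (k - j) (insert a K)ᶜ).card ≤ (ups k τ \ nbr k K C).card := by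
    apply Finset.card_le_card_of_injOn (fun U => τ ∪ U)
    · intro U hU
      simp only [Finset.mem_coe, Finset.mem_powersetCard] at hU ⊢
      obtain ⟨hU, hUc⟩ := hU
      have hd : Disjoint τ U := by
        rw [Finset.disjoint_left]
        intro x hx hxU
        exact Finset.mem_compl.mp (hU hxU) (hτK hx)
      rw [Finset.mem_sdiff, mem_ups, mem_nbr]
      refine ⟨⟨?_, Finset.subset_union_left⟩, ?_⟩
      · rw [Finset.card_union_of_disjoint hd, hτ, hUc]; omega
      · rintro ⟨_, _, w, hw, hs⟩
        rw [Finset.mem_sdiff] at hw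
        have hs2 : insert w C ⊆ τ.erase a := by
          intro x hx
          have hxK : x ∈ K := by
            rcases Finset.mem_insert.mp hx with h | h
            · rw [h]; exact hw.1
            · exact hCK h
          have hx' : x ∈ τ ∪ U := by
            exact hs hx
          rw [Finset.mem_erase]
          refine ⟨fun h => ha (h ▸ hxK), ?_⟩
          rcases Finset.mem_union.mp hx' with h | h
          · exact h
          · exact absurd (Finset.mem_insert_of_mem hxK) (Finset.mem_compl.mp (hU h))
        have h3 := Finset.card_le_card hs2
        rw [Finset.card_erase_of_mem haτ, Finset.card_insert_of_notMem hw.2, hτ, hC] at h3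
        omega
    · intro U hU U' hU' he
      simp only [Finset.mem_coe, Finset.mem_powersetCard] at hU hU'
      have hd : ∀ V : Finset (Fin n), V ⊆ (insert a K)ᶜ → (τ ∪ V) \ τ = V := by
        intro V hV
        apply Finset.union_sdiff_cancel_left
        rw [Finset.disjoint_left]
        intro x hx hxU
        exact Finset.mem_compl.mp (hV hxU) (hτK hx)
      have he' : τ ∪ U = τ ∪ U' := he
      rw [← hd U hU.1, ← hd U' hU'.1, he']
  rwa [Finset.card_powersetCard, Finset.card_compl, Fintype.card_fin,
    Finset.card_insert_of_notMem ha, hK] at h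

/-! ### Probability bounds for fixed `n` -/

lemma not_mem_nbr {k n : ℕ} (K C : Finset (Fin n)) : K ∉ nbr k K C := by
  intro h; exact (mem_nbr.mp h).2.1 rfl

lemma upper_fixed {k j n : ℕ} (hjk : j < k) (N c : ℝ) (hN : 0 < N) (hc : 0 ≤ c) :
    (birthMeasure n).real {t | ∃ p, c / N ≤ p ∧ p ≤ 1 ∧ ∃ K C,
      IsMjMinus (complexAt k n t p) k j K C} ≤
    (n : ℝ) ^ (k + 1) * ((2 : ℝ) ^ (k + 1) * ∑ i ∈ Finset.range (⌈N⌉₊ + 1),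
      (c + i + 1) / N *
        Real.exp (-((c + i) / N * ((k - j + 1) * (n - (k + 1)).choose (k - j) : ℕ)))) := by
  set M : ℕ := (k - j + 1) * (n - (k + 1)).choose (k - j) with hM
  set S : ℝ := ∑ i ∈ Finset.range (⌈N⌉₊ + 1),
      (c + i + 1) / N * Real.exp (-((c + i) / N * (M : ℝ))) with hS
  have hS0 : 0 ≤ S := Finset.sum_nonneg fun i _ => by positivity
  have hsub : {t : Finset (Fin n) → ℝ | ∃ p, c / N ≤ p ∧ p ≤ 1 ∧ ∃ K C,
      IsMjMinus (complexAt k n t p) k j K C} ⊆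
      ⋃ K ∈ Finset.powersetCard (k + 1) (Finset.univ : Finset (Fin n)),
        ⋃ C ∈ Finset.powersetCard j K, ⋃ i ∈ Finset.range (⌈N⌉₊ + 1),
          box {K} (nbr k K C) ((c + i + 1) / N) ((c + i) / N) := by
    rintro t ⟨p, hp0, hp1, K, C, h⟩
    obtain ⟨h1, h2, h3, h4, h5⟩ := mjMinus_imp (by omega) t p K C h
    have hpN : c ≤ p * N := by rwa [div_le_iff₀ hN] at hp0
    simp only [Set.mem_iUnion]
    refine ⟨K, Finset.mem_powersetCard.mpr ⟨Finset.subset_univ _, h1⟩, C,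
      Finset.mem_powersetCard.mpr ⟨h3, h2⟩, ⌊p * N - c⌋₊, ?_, ?_, ?_⟩
    · rw [Finset.mem_range, Nat.lt_succ_iff]
      refine (Nat.floor_le_floor (b := N) ?_).trans (Nat.floor_le_ceil N)
      nlinarith
    · intro i hi
      rw [Finset.mem_singleton] at hi
      subst hi
      refine h4.trans ?_
      rw [le_div_iff₀ hN]
      have := (Nat.lt_floor_add_one (p * N - c)).le
      linarith
    · intro L hL
      refine lt_of_le_of_lt ?_ (h5 L hL)
      rw [div_le_iff₀ hN]
      have := Nat.floor_le (show 0 ≤ p * N - c by linarith)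
      linarith
  refine (measureReal_mono hsub (measure_ne_top _ _)).trans ?_
  refine (measureReal_biUnion_finset_le _ _).trans ?_
  have hK : ∀ K ∈ Finset.powersetCard (k + 1) (Finset.univ : Finset (Fin n)),
      (birthMeasure n).real (⋃ C ∈ Finset.powersetCard j K, ⋃ i ∈ Finset.range (⌈N⌉₊ + 1),
          box {K} (nbr k K C) ((c + i + 1) / N) ((c + i) / N)) ≤ 2 ^ (k + 1) * S := by
    intro K hK
    have hKc := (Finset.mem_powersetCard.mp hK).2
    refine (measureReal_biUnion_finset_le _ _).trans ?_
    have hC : ∀ C ∈ Finset.powersetCard j K, (birthMeasure n).real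
        (⋃ i ∈ Finset.range (⌈N⌉₊ + 1),
          box {K} (nbr k K C) ((c + i + 1) / N) ((c + i) / N)) ≤ S := by
      intro C hC
      have hC' := Finset.mem_powersetCard.mp hC
      refine (measureReal_biUnion_finset_le _ _).trans ?_
      refine Finset.sum_le_sum fun i _ => ?_
      exact birth_box_le n K _ _ _ (not_mem_nbr K C) (by positivity) (by positivity) M
        (le_card_nbr K C hKc hC'.2 hC'.1 hjk)
    refine (Finset.sum_le_card_nsmul _ _ _ hC).trans ?_
    rw [nsmul_eq_mul]
    refine mul_le_mul_of_nonneg_right ?_ hS0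
    rw [Finset.card_powersetCard, hKc]
    exact_mod_cast Nat.choose_le_two_pow _ _
  refine (Finset.sum_le_card_nsmul _ _ _ hK).trans ?_
  rw [nsmul_eq_mul]
  refine mul_le_mul_of_nonneg_right ?_ (by positivity)
  rw [Finset.card_powersetCard, Finset.card_univ, Fintype.card_fin]
  exact_mod_cast Nat.choose_le_pow _ _

lemma exists_data {k j n : ℕ} (hjk : j < k) (hn : k + 2 ≤ n) (K : Finset (Fin n)) :
    ∃ (C : Finset (Fin n)) (w a : Fin n), K.card = k + 1 →
      C.card = j ∧ C ⊆ K ∧ w ∈ K \ C ∧ a ∉ K := by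
  by_cases h : K.card = k + 1
  · obtain ⟨C, hCK, hC⟩ := Finset.exists_subset_card_eq (show j ≤ K.card by omega)
    obtain ⟨w, hw⟩ : (K \ C).Nonempty := by
      apply Finset.card_pos.mp
      rw [Finset.card_sdiff_of_subset hCK]; omega
    obtain ⟨a, ha⟩ : (Kᶜ).Nonempty := by
      apply Finset.card_pos.mp
      rw [Finset.card_compl, Fintype.card_fin]; omega
    exact ⟨C, w, a, fun _ => ⟨hC, hCK, hw, Finset.mem_compl.mp ha⟩⟩
  · exact ⟨∅, ⟨0, by omega⟩, ⟨0, by omega⟩, fun h' => absurd h' h⟩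

lemma lower_fixed {k j n : ℕ} (hj : 1 ≤ j) (hjk : j < k) (hn : k + 2 ≤ n) (p m0 : ℝ)
    (hp0 : 0 < p) (hp1 : p < 1) (hm0 : 0 < m0)
    (hm : m0 ≤ (n.choose (k + 1) : ℝ) *
      (p * (1 - p) ^ ((k - j + 1) * n.choose (k - j)))) :
    2 * (1 - (j + 2) * (1 - p) ^ ((n - (k + 2)).choose (k - j))) -
      ((1 - p) ^ ((k + 1) ^ 2 * n ^ (k - j - 1)))⁻¹ - 1 / m0 ≤
    (birthMeasure n).real {t | ∃ K C J, IsMj (complexAt k n t p) k j K C J} := by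
  choose C w a hd using exists_data (k := k) (j := j) (n := n) hjk hn
  set μ := birthMeasure n with hμ
  set s := Finset.powersetCard (k + 1) (Finset.univ : Finset (Fin n)) with hs
  have hsc : ∀ K ∈ s, K.card = k + 1 := fun K hK => (Finset.mem_powersetCard.mp hK).2
  set q := 1 - p with hq
  have hq0 : 0 < q := by linarith
  have hq1 : q ≤ 1 := by linarith
  set M := (n - (k + 2)).choose (k - j) with hM
  set M2 := (k + 1) ^ 2 * n ^ (k - j - 1) with hM2
  let E : Finset (Fin n) → Set (Finset (Fin n) → ℝ) := fun K => box {K} (nbr k K (C K)) p p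
  let T : Finset (Fin n) → Finset (Finset (Fin n)) := fun K =>
    (Finset.powersetCard (j + 1) (insert (a K) (insert (w K) (C K)))).filter fun τ => a K ∈ τ
  let F : Finset (Fin n) → Set (Finset (Fin n) → ℝ) := fun K =>
    E K \ ⋃ τ ∈ T K, box ∅ (ups k τ) p p
  have hEm : ∀ K, MeasurableSet (E K) := fun K => measurableSet_box _ _ _ _
  have hBm : ∀ K, MeasurableSet (⋃ τ ∈ T K, box ∅ (ups k τ) p p) := fun K =>
    Finset.measurableSet_biUnion _ fun τ _ => measurableSet_box _ _ _ _
  have hEp : ∀ K, μ.real (E K) = p * q ^ (nbr k K (C K)).card := by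
    intro K
    simp only [E, hμ]
    rw [birth_box n _ _ p (by simpa using not_mem_nbr K (C K)) hp0.le hp1.le]
    simp [hq]
  set m := ∑ K ∈ s, μ.real (E K) with hmdef
  have hm' : m0 ≤ m := by
    refine hm.trans ?_
    have : (n.choose (k + 1) : ℝ) = s.card := by simp [hs]
    rw [this, ← nsmul_eq_mul]
    refine Finset.card_nsmul_le_sum _ _ _ fun K hK => ?_
    obtain ⟨h1, h2, h3, h4⟩ := hd K (hsc K hK)
    rw [hEp]
    refine mul_le_mul_of_nonneg_left ?_ hp0.le
    exact pow_le_pow_of_le_one hq0.le hq1 (card_nbr_le K (C K) (hsc K hK) h1 h2 hjk)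
  have hmpos : 0 < m := hm0.trans_le hm'
  have hFp : ∀ K ∈ s, (1 - (j + 2) * q ^ M) * μ.real (E K) ≤ μ.real (F K) := by
    intro K hK
    obtain ⟨h1, h2, h3, h4⟩ := hd K (hsc K hK)
    have hwK := Finset.mem_sdiff.mp h3
    have hbad : μ.real (E K ∩ ⋃ τ ∈ T K, box ∅ (ups k τ) p p) ≤
        (j + 2) * (q ^ M * μ.real (E K)) := by
      rw [Set.inter_iUnion₂]
      refine (measureReal_biUnion_finset_le _ _).trans ?_
      have hτ : ∀ τ ∈ T K, μ.real (E K ∩ box ∅ (ups k τ) p p) ≤ q ^ M * μ.real (E K) := by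
        intro τ hτ
        simp only [T, Finset.mem_filter, Finset.mem_powersetCard] at hτ
        obtain ⟨⟨hτ1, hτ2⟩, hτ3⟩ := hτ
        have hτK : τ ⊆ insert (a K) K := hτ1.trans
          (Finset.insert_subset_insert _ (Finset.insert_subset hwK.1 h2))
        have hsub : E K ∩ box ∅ (ups k τ) p p ⊆ 
            box {K} (nbr k K (C K) ∪ (ups k τ \ nbr k K (C K))) p p := by
          rintro t ⟨⟨ha, hb⟩, ⟨_, hc⟩⟩
          refine ⟨ha, fun L hL => ?_⟩
          rcases Finset.mem_union.mp hL with h | h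
          · exact hb L h
          · exact hc L (Finset.mem_sdiff.mp h).1
        refine (measureReal_mono hsub (measure_ne_top _ _)).trans ?_
        have hnot : K ∉ nbr k K (C K) ∪ (ups k τ \ nbr k K (C K)) := by
          intro h
          rcases Finset.mem_union.mp h with h | h
          · exact not_mem_nbr _ _ h
          · exact h4 ((mem_ups.mp (Finset.mem_sdiff.mp h).1).2 hτ3)
        rw [hμ, birth_box n _ _ p (by simpa using hnot) hp0.le hp1.le, ← hμ,
          Finset.card_union_of_disjoint Finset.disjoint_sdiff, hEp, ← hq, pow_add]
        simp only [Finset.card_singleton, pow_one]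
        have : q ^ (ups k τ \ nbr k K (C K)).card ≤ q ^ M := pow_le_pow_of_le_one hq0.le hq1
          (le_card_ups_sdiff K (C K) τ (a K) (hsc K hK) h1 h2 hjk h4 hτ3 hτ2 hτK)
        have hpos : 0 ≤ p * q ^ (nbr k K (C K)).card := by positivity
        nlinarith
      refine (Finset.sum_le_card_nsmul _ _ _ hτ).trans ?_
      rw [nsmul_eq_mul]
      refine mul_le_mul_of_nonneg_right ?_ (by positivity)
      have h5 : (T K).card ≤ j + 2 := by
        refine (Finset.card_filter_le _ _).trans ?_
        rw [Finset.card_powersetCard, Finset.card_insert_of_notMem, 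
          Finset.card_insert_of_notMem hwK.2, h1]
        · simp [Nat.choose_succ_self_right]
        · intro h; exact h4 (Finset.insert_subset hwK.1 h2 h)
      exact_mod_cast h5
    have hsplit := measureReal_inter_add_sdiff (μ := μ) (s := E K) (hBm K)
    change _ ≤ μ.real (E K \ _)
    nlinarith
  have hpair : ∀ K ∈ s, ∀ K' ∈ s, K ≠ K' →
      μ.real (E K ∩ E K') ≤ (q ^ M2)⁻¹ * (μ.real (E K) * μ.real (E K')) := by
    intro K hK K' hK' hne
    obtain ⟨h1, h2, h3, h4⟩ := hd K (hsc K hK)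
    obtain ⟨h1', h2', h3', h4'⟩ := hd K' (hsc K' hK')
    have hnn : 0 ≤ (q ^ M2)⁻¹ * (μ.real (E K) * μ.real (E K')) := by positivity
    by_cases hin : K ∈ nbr k K' (C K')
    · have : E K ∩ E K' = ∅ := by
        ext t
        simp only [Set.mem_inter_iff, Set.mem_empty_iff_false, iff_false]
        rintro ⟨⟨ha, _⟩, ⟨_, hb⟩⟩
        exact absurd (ha K (by simp)) (not_le.mpr (hb K hin))
      rw [this]; simpa using hnn
    by_cases hin' : K' ∈ nbr k K (C K)
    · have : E K ∩ E K' = ∅ := by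
        ext t
        simp only [Set.mem_inter_iff, Set.mem_empty_iff_false, iff_false]
        rintro ⟨⟨_, hb⟩, ⟨ha, _⟩⟩
        exact absurd (ha K' (by simp)) (not_le.mpr (hb K' hin'))
      rw [this]; simpa using hnn
    have hI := card_inter_le K (C K) K' (C K') (hsc K hK) h1 h2 (hsc K' hK') h1' hjk hne hin
    have hU := Finset.card_union_add_card_inter (nbr k K (C K)) (nbr k K' (C K'))
    have hsub : E K ∩ E K' ⊆ box {K, K'} (nbr k K (C K) ∪ nbr k K' (C K')) p p := by
      rintro t ⟨⟨ha, hb⟩, ⟨ha', hb'⟩⟩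
      refine ⟨fun L hL => ?_, fun L hL => ?_⟩
      · rcases Finset.mem_insert.mp hL with h | h
        · exact ha L (by simp [h])
        · exact ha' L h
      · rcases Finset.mem_union.mp hL with h | h
        · exact hb L h
        · exact hb' L h
    refine (measureReal_mono hsub (measure_ne_top _ _)).trans ?_
    have hdis : Disjoint ({K, K'} : Finset (Finset (Fin n)))
        (nbr k K (C K) ∪ nbr k K' (C K')) := by
      rw [Finset.disjoint_left]
      intro L hL hL'
      have hL := Finset.mem_insert.mp hL
      rw [Finset.mem_singleton] at hL
      rcases hL with rfl | rfl <;> rcases Finset.mem_union.mp hL' with h | h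
      · exact not_mem_nbr _ _ h
      · exact hin h
      · exact hin' h
      · exact not_mem_nbr _ _ h
    rw [hμ, birth_box n _ _ p hdis hp0.le hp1.le, ← hμ, ← hq, hEp, hEp,
      Finset.card_pair hne, le_inv_mul_iff₀ (by positivity)]
    have e : q ^ (nbr k K (C K)).card * q ^ (nbr k K' (C K')).card =
        q ^ (nbr k K (C K) ∪ nbr k K' (C K')).card *
        q ^ (nbr k K (C K) ∩ nbr k K' (C K')).card := by
      rw [← pow_add, ← pow_add, hU]
    have hle : q ^ M2 ≤ q ^ (nbr k K (C K) ∩ nbr k K' (C K')).card :=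
      pow_le_pow_of_le_one hq0.le hq1 hI
    calc q ^ M2 * (p ^ 2 * q ^ (nbr k K (C K) ∪ nbr k K' (C K')).card)
        ≤ q ^ (nbr k K (C K) ∩ nbr k K' (C K')).card *
          (p ^ 2 * q ^ (nbr k K (C K) ∪ nbr k K' (C K')).card) :=
          mul_le_mul_of_nonneg_right hle (by positivity)
      _ = p ^ 2 * (q ^ (nbr k K (C K)).card * q ^ (nbr k K' (C K')).card) := by rw [e]; ring
      _ = _ := by ring
  have hmain := second_moment μ s E F (fun K _ => (hEm K).diff (hBm K))
    (fun K _ => Set.sdiff_subset) m ((j + 2) * q ^ M) (q ^ M2)⁻¹ hmpos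
    (by
      rw [hmdef, Finset.mul_sum]
      exact Finset.sum_le_sum hFp)
    (by
      have : ∀ K ∈ s, ∑ K' ∈ s, μ.real (E K ∩ E K') ≤
          μ.real (E K) + (q ^ M2)⁻¹ * (μ.real (E K) * m) := by
        intro K hK
        have hb : ∀ K' ∈ s, μ.real (E K ∩ E K') ≤ (if K' = K then μ.real (E K) else 0) +
            (q ^ M2)⁻¹ * (μ.real (E K) * μ.real (E K')) := by
          intro K' hK'
          by_cases h : K' = K
          · subst h
            have : 0 ≤ (q ^ M2)⁻¹ * (μ.real (E K') * μ.real (E K')) := by positivity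
            simp only [Set.inter_self, if_true]
            linarith
          · simp only [h, if_false, zero_add]
            exact hpair K hK K' hK' (Ne.symm h)
        refine (Finset.sum_le_sum hb).trans ?_
        rw [Finset.sum_add_distrib, ← Finset.mul_sum, ← Finset.mul_sum]
        simp [hK, hmdef]
      refine (Finset.sum_le_sum this).trans ?_
      rw [Finset.sum_add_distrib, ← Finset.mul_sum, ← Finset.sum_mul, ← hmdef, sq])
  have hsub : (⋃ K ∈ s, F K) ⊆ {t | ∃ K C J, IsMj (complexAt k n t p) k j K C J} := by
    intro t ht
    simp only [Set.mem_iUnion] at ht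
    obtain ⟨K, hK, ⟨hE1, hE2⟩, hB⟩ := ht
    obtain ⟨h1, h2, h3, h4⟩ := hd K (hsc K hK)
    refine ⟨K, C K, mj_of_good hj (by omega) t p K (C K) (w K) (a K) (hsc K hK) h1 h2 h3 h4
      (hE1 K (by simp)) hE2 ?_⟩
    intro τ hτ1 hτ2 hτ3
    by_contra hcon
    push Not at hcon
    apply hB
    simp only [Set.mem_iUnion]
    exact ⟨τ, Finset.mem_filter.mpr ⟨Finset.mem_powersetCard.mpr ⟨hτ1, hτ2⟩, hτ3⟩,
      by simp, hcon⟩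
  refine le_trans ?_ (hmain.trans (measureReal_mono hsub (measure_ne_top _ _)))
  have : 1 / m ≤ 1 / m0 := one_div_le_one_div_of_le hm0 hm'
  linarith

/-! ### Asymptotics -/

lemma c_sq_tendsto (c : ℕ → ℝ) (D : ℝ) (h1 : ∀ᶠ n : ℕ in atTop, 1 ≤ c n)
    (h2 : ∀ᶠ n : ℕ in atTop, c n ≤ D * Real.log n) :
    Tendsto (fun n : ℕ => c n ^ 2 / n) atTop (nhds 0) := by
  have h := (Real.isLittleO_pow_log_id_atTop (n := 2)).tendsto_div_nhds_zero.comp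
    tendsto_natCast_atTop_atTop
  have h' := h.const_mul (D ^ 2)
  rw [mul_zero] at h'
  refine squeeze_zero' (Eventually.of_forall fun n => by positivity) ?_ h'
  filter_upwards [h1, h2] with n a b
  simp only [Function.comp, id]
  rw [← mul_div_assoc, ← mul_pow]
  gcongr

lemma c_tendsto (c : ℕ → ℝ) (D : ℝ) (h1 : ∀ᶠ n : ℕ in atTop, 1 ≤ c n)
    (h2 : ∀ᶠ n : ℕ in atTop, c n ≤ D * Real.log n) :
    Tendsto (fun n : ℕ => c n / n) atTop (nhds 0) := by
  refine squeeze_zero' ?_ ?_ (c_sq_tendsto c D h1 h2)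
  · filter_upwards [h1] with n a
    positivity
  · filter_upwards [h1] with n a
    gcongr
    nlinarith

/-- `N = (d+1) n^d / d!`. -/
noncomputable def NN (d n : ℕ) : ℝ := ((d + 1 : ℕ) : ℝ) * (n : ℝ) ^ d / (Nat.factorial d)

lemma NN_pos {d n : ℕ} (hn : 0 < n) : 0 < NN d n := by
  unfold NN; positivity

lemma choose_upper (d n : ℕ) : (((d + 1) * n.choose d : ℕ) : ℝ) ≤ NN d n := by
  unfold NN
  push_cast
  rw [mul_div_assoc]
  gcongr
  exact Nat.choose_le_pow_div d n

lemma choose_lower (d b n : ℕ) (h : b + d ≤ n) (hn : 0 < n) :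
    NN d n * (1 - (d * (b + d) : ℝ) / n) ≤ (((d + 1) * (n - b).choose d : ℕ) : ℝ) := by
  have h1 := Nat.pow_le_choose (α := ℝ) d (n - b)
  have h2 : ((n - b + 1 - d : ℕ) : ℝ) = n - b - d + 1 := by
    have : n - b + 1 - d = n + 1 - (b + d) := by omega
    rw [this, Nat.cast_sub (by omega)]; push_cast; ring
  have hn' : (0 : ℝ) < n := by exact_mod_cast hn
  have hbd : ((b : ℝ) + d) ≤ n := by exact_mod_cast h
  have h3 : (n : ℝ) ^ d * (1 - (d * (b + d) : ℝ) / n) ≤ ((n - b + 1 - d : ℕ) : ℝ) ^ d := by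
    have hb := one_add_mul_le_pow (a := -((b + d : ℝ) / n)) (by
      have : (b + d : ℝ) / n ≤ 1 := by rw [div_le_one hn']; exact hbd
      linarith) d
    calc (n : ℝ) ^ d * (1 - (d * (b + d) : ℝ) / n)
        = (n : ℝ) ^ d * (1 + d * -((b + d : ℝ) / n)) := by ring
      _ ≤ (n : ℝ) ^ d * (1 + -((b + d : ℝ) / n)) ^ d := by gcongr
      _ = ((n : ℝ) - b - d) ^ d := by
        rw [← mul_pow]; congr 1; field_simp; ring
      _ ≤ _ := by
        rw [h2]
        apply pow_le_pow_left₀ <;> linarith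
  have hf : (0 : ℝ) < (Nat.factorial d) := by positivity
  have h4 : (n : ℝ) ^ d * (1 - (d * (b + d) : ℝ) / n) / (Nat.factorial d) ≤
      ((n - b).choose d : ℝ) := by
    rw [div_le_iff₀ hf]
    refine h3.trans ?_
    rw [div_le_iff₀ hf] at h1
    exact_mod_cast h1
  unfold NN
  push_cast
  calc _ = ((d : ℝ) + 1) * ((n : ℝ) ^ d * (1 - (d * (b + d) : ℝ) / n) / (Nat.factorial d)) := by
        ring
    _ ≤ _ := by gcongr

lemma choose_lower_ev (d b : ℕ) :
    ∀ᶠ n : ℕ in atTop, NN d n / 2 ≤ (((d + 1) * (n - b).choose d : ℕ) : ℝ) := by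
  have : Tendsto (fun n : ℕ => (d * (b + d) : ℝ) / n) atTop (nhds 0) :=
    tendsto_const_div_atTop_nhds_zero_nat _
  filter_upwards [this.eventually_le_const (show (0 : ℝ) < 1 / 2 by norm_num),
    eventually_ge_atTop (b + d), eventually_gt_atTop 0] with n h1 h2 h3
  refine le_trans ?_ (choose_lower d b n h2 h3)
  have := NN_pos (d := d) h3
  nlinarith

lemma upper_asymp (k j : ℕ) (hjk : j < k) (c : ℕ → ℝ) (D : ℝ)
    (h1 : ∀ᶠ n : ℕ in atTop, 1 ≤ c n) (h2 : ∀ᶠ n : ℕ in atTop, c n ≤ D * Real.log n)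
    (h3 : Tendsto (fun n : ℕ => (n : ℝ) ^ (j + 1) * Real.log n * Real.exp (-c n)) atTop (nhds 0)) :
    Tendsto (fun n : ℕ => (birthMeasure n).real {t | ∃ p, c n / NN (k - j) n ≤ p ∧ p ≤ 1 ∧ ∃ K C,
      IsMjMinus (complexAt k n t p) k j K C}) atTop (nhds 0) := by
  set d := k - j with hd
  have hdk : k + 1 = d + (j + 1) := by omega
  set r := Real.exp (-(1 / 2)) with hr
  have hr0 : 0 < r := Real.exp_pos _
  have hr1 : r < 1 := by rw [hr, Real.exp_lt_one_iff]; norm_num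
  have hsum : Summable (fun i : ℕ => ((i : ℝ) + 2) * r ^ i) := by
    have a := summable_pow_mul_geometric_of_norm_lt_one (r := r) 1
      (by rw [Real.norm_eq_abs, abs_of_pos hr0]; exact hr1)
    have b := (summable_geometric_of_lt_one hr0.le hr1).mul_left 2
    refine (a.add b).congr fun i => ?_
    simp; ring
  set B := ∑' i : ℕ, ((i : ℝ) + 2) * r ^ i with hB
  have hB0 : 0 ≤ B := tsum_nonneg fun i => by positivity
  set κ : ℝ := 2 ^ (k + 1) * (Real.exp 1 * B) * D * ((Nat.factorial d) / (d + 1)) with hκ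
  have hlim := h3.const_mul κ
  rw [mul_zero] at hlim
  refine squeeze_zero' (Eventually.of_forall fun n => measureReal_nonneg) ?_ hlim
  have hA : Tendsto (fun n : ℕ => (d * (((k + 1 : ℕ) : ℝ) + d) : ℝ) / n) atTop (nhds 0) :=
    tendsto_const_div_atTop_nhds_zero_nat _
  have hAc : Tendsto (fun n : ℕ => (d * (((k + 1 : ℕ) : ℝ) + d) : ℝ) * (c n / n)) atTop (nhds 0) := by
    simpa using (c_tendsto c D h1 h2).const_mul (d * (((k + 1 : ℕ) : ℝ) + d) : ℝ)
  filter_upwards [h1, h2, hA.eventually_le_const (show (0 : ℝ) < 1 / 2 by norm_num),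
    hAc.eventually_le_const (show (0 : ℝ) < 1 by norm_num),
    eventually_ge_atTop (k + 1 + d), eventually_gt_atTop 0] with n a1 a2 a3 a4 a5 a6
  have hN := NN_pos (d := d) a6
  have hn' : (0 : ℝ) < n := by exact_mod_cast a6
  refine (upper_fixed hjk (NN d n) (c n) hN (by linarith)).trans ?_
  rw [← hd]
  have hM := choose_lower d (k + 1) n a5 a6
  set M : ℝ := (((d + 1) * (n - (k + 1)).choose d : ℕ) : ℝ) with hMdef
  have hterm : ∀ i ∈ Finset.range (⌈NN d n⌉₊ + 1),
      (c n + i + 1) / NN d n * Real.exp (-((c n + i) / NN d n * M)) ≤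
      (c n / NN d n * (Real.exp 1 * Real.exp (-c n))) * (((i : ℝ) + 2) * r ^ i) := by
    intro i _
    have e1 : (c n + i + 1) / NN d n ≤ c n / NN d n * ((i : ℝ) + 2) := by
      rw [div_mul_eq_mul_div]
      gcongr
      have : (0 : ℝ) ≤ i := by positivity
      nlinarith
    have e2 : Real.exp (-((c n + i) / NN d n * M)) ≤ Real.exp 1 * Real.exp (-c n) * r ^ i := by
      rw [hr, ← Real.exp_nat_mul, ← Real.exp_add, ← Real.exp_add]
      apply Real.exp_le_exp.mpr
      have hi : (0 : ℝ) ≤ i := by positivity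
      have : (c n + i) / NN d n * (NN d n * (1 - (d * (((k + 1 : ℕ) : ℝ) + d) : ℝ) / n)) ≤
          (c n + i) / NN d n * M := by gcongr
      have e3 : (c n + i) / NN d n * (NN d n * (1 - (d * (((k + 1 : ℕ) : ℝ) + d) : ℝ) / n)) =
          c n - (d * (((k + 1 : ℕ) : ℝ) + d) : ℝ) * (c n / n) +
            i * (1 - (d * (((k + 1 : ℕ) : ℝ) + d) : ℝ) / n) := by
        field_simp
      rw [e3] at this
      have e4 : (i : ℝ) * (1 / 2) ≤ i * (1 - (d * (((k + 1 : ℕ) : ℝ) + d) : ℝ) / n) := by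
        apply mul_le_mul_of_nonneg_left _ hi
        linarith
      linarith
    calc _ ≤ (c n / NN d n * ((i : ℝ) + 2)) * (Real.exp 1 * Real.exp (-c n) * r ^ i) :=
          mul_le_mul e1 e2 (Real.exp_pos _).le (by positivity)
      _ = _ := by ring
  have hS := Finset.sum_le_sum hterm
  rw [← Finset.mul_sum] at hS
  have hS2 : ∑ i ∈ Finset.range (⌈NN d n⌉₊ + 1), ((i : ℝ) + 2) * r ^ i ≤ B :=
    hsum.sum_le_tsum _ fun i _ => by positivity
  have hS3 := hS.trans (mul_le_mul_of_nonneg_left hS2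
    (show 0 ≤ c n / NN d n * (Real.exp 1 * Real.exp (-c n)) by positivity))
  calc _ ≤ (n : ℝ) ^ (k + 1) * ((2 : ℝ) ^ (k + 1) *
        (c n / NN d n * (Real.exp 1 * Real.exp (-c n)) * B)) := by gcongr
    _ ≤ (n : ℝ) ^ (k + 1) * ((2 : ℝ) ^ (k + 1) *
        (D * Real.log n / NN d n * (Real.exp 1 * Real.exp (-c n)) * B)) := by gcongr
    _ = _ := by
      rw [hκ, hdk, NN, pow_add (n : ℝ)]
      push_cast
      field_simp

lemma lower_asymp (k j : ℕ) (hj : 1 ≤ j) (hjk : j < k) (c : ℕ → ℝ) (D : ℝ)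
    (h1 : ∀ᶠ n : ℕ in atTop, Real.log n ≤ c n) (h2 : ∀ᶠ n : ℕ in atTop, c n ≤ D * Real.log n)
    (h3 : Tendsto (fun n : ℕ => (n : ℝ) ^ (j + 1) * Real.log n * Real.exp (-c n)) atTop atTop) :
    Tendsto (fun n : ℕ => (birthMeasure n).real {t | ∃ K C J,
      IsMj (complexAt k n t (c n / NN (k - j) n)) k j K C J}) atTop (nhds 1) := by
  set d := k - j with hd
  have hd1 : 1 ≤ d := by omega
  have hdk : k + 1 = d + (j + 1) := by omega
  have hlog : Tendsto (fun n : ℕ => Real.log n) atTop atTop :=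
    Real.tendsto_log_atTop.comp tendsto_natCast_atTop_atTop
  have hctop : Tendsto c atTop atTop := tendsto_atTop_mono' _ h1 hlog
  have hc1 : ∀ᶠ n : ℕ in atTop, 1 ≤ c n := hctop.eventually_ge_atTop 1
  have hcn := c_tendsto c D hc1 h2
  have hcn2 := c_sq_tendsto c D hc1 h2
  set p : ℕ → ℝ := fun n => c n / NN d n with hp
  -- bound on `p`
  have hpb : ∀ᶠ n : ℕ in atTop, 0 < p n ∧ p n * (n : ℝ) ^ (d - 1) ≤
      (Nat.factorial d) * (c n / n) := by
    filter_upwards [hc1, eventually_gt_atTop 0] with n a1 a2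
    have hn' : (0 : ℝ) < n := by exact_mod_cast a2
    have hN := NN_pos (d := d) a2
    refine ⟨div_pos (by linarith) hN, ?_⟩
    have : (n : ℝ) ^ d = n ^ (d - 1) * n := by
      rw [← pow_succ]; congr 1; omega
    have e : p n * (n : ℝ) ^ (d - 1) = (Nat.factorial d) * (c n / n) * (1 / ((d : ℝ) + 1)) := by
      rw [hp]; simp only [NN]; rw [this]; push_cast; field_simp
    rw [e]
    have h0 : 0 ≤ (Nat.factorial d : ℝ) * (c n / n) := by positivity
    have h1' : 1 / ((d : ℝ) + 1) ≤ 1 := by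
      rw [div_le_one (by positivity)]; linarith [show (0 : ℝ) ≤ d by positivity]
    nlinarith
  have hpb2 : ∀ᶠ n : ℕ in atTop, p n ≤ (Nat.factorial d) * (c n / n) := by
    filter_upwards [hpb, eventually_gt_atTop 0] with n a1 a2
    refine le_trans ?_ a1.2
    have : (1 : ℝ) ≤ (n : ℝ) ^ (d - 1) := one_le_pow₀ (by exact_mod_cast a2)
    nlinarith [a1.1]
  have hl0 : Tendsto (fun n : ℕ => (Nat.factorial d : ℝ) * (c n / n)) atTop (nhds 0) := by
    simpa using hcn.const_mul (Nat.factorial d : ℝ)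
  have hp0 : Tendsto p atTop (nhds 0) :=
    squeeze_zero' (hpb.mono fun n h => h.1.le) hpb2 hl0
  have hcp : ∀ᶠ n : ℕ in atTop, (c n + 1) * p n ≤ 1 := by
    have := (hcn2.const_mul (2 * (Nat.factorial d : ℝ)))
    rw [mul_zero] at this
    filter_upwards [hc1, hpb, hpb2, this.eventually_le_const (show (0 : ℝ) < 1 by norm_num)]
      with n a1 a2 a3 a4
    calc (c n + 1) * p n ≤ (2 * c n) * ((Nat.factorial d) * (c n / n)) := by
          apply mul_le_mul _ a3 a2.1.le (by linarith); linarith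
      _ = 2 * (Nat.factorial d : ℝ) * (c n ^ 2 / n) := by ring
      _ ≤ 1 := a4
  -- shell term
  have hT1 : Tendsto (fun n : ℕ => (1 - p n) ^ ((n - (k + 2)).choose d)) atTop (nhds 0) := by
    have hl : Tendsto (fun n : ℕ => Real.exp (-(c n * (1 / (2 * ((d : ℝ) + 1)))))) atTop (nhds 0) :=
      Real.tendsto_exp_neg_atTop_nhds_zero.comp
        (hctop.atTop_mul_const (by positivity))
    refine squeeze_zero' ?_ ?_ hl
    · filter_upwards [hp0.eventually_le_const (show (0 : ℝ) < 1 by norm_num)] with n a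
      exact pow_nonneg (by linarith) _
    · filter_upwards [hp0.eventually_le_const (show (0 : ℝ) < 1 by norm_num),
        choose_lower_ev d (k + 2), hc1, eventually_gt_atTop 0] with n a b hc a0
      have hN := NN_pos (d := d) a0
      have e1 : 1 - p n ≤ Real.exp (-p n) := by
        have := Real.add_one_le_exp (-p n); linarith
      refine (pow_le_pow_left₀ (by linarith) e1 _).trans ?_
      rw [← Real.exp_nat_mul]
      apply Real.exp_le_exp.mpr
      push_cast at b
      set X : ℝ := ((n - (k + 2)).choose d : ℝ)
      have e2 : NN d n * (1 / (2 * ((d : ℝ) + 1))) ≤ X := by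
        have hd0 : (0 : ℝ) < (d : ℝ) + 1 := by positivity
        rw [mul_one_div, div_le_iff₀ (by positivity)]
        linarith
      have e3 : c n * (1 / (2 * ((d : ℝ) + 1))) = p n * (NN d n * (1 / (2 * ((d : ℝ) + 1)))) := by
        rw [hp]; simp only []; field_simp
      rw [e3]
      have : 0 ≤ p n := div_nonneg (by linarith) hN.le
      nlinarith
  -- correlation term
  have hT2 : Tendsto (fun n : ℕ => (1 - p n) ^ ((k + 1) ^ 2 * n ^ (d - 1))) atTop (nhds 1) := by
    have hl : Tendsto (fun n : ℕ => 1 - ((k : ℝ) + 1) ^ 2 * ((Nat.factorial d : ℝ) * (c n / n)))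
        atTop (nhds 1) := by
      simpa using (hl0.const_mul (((k : ℝ) + 1) ^ 2)).const_sub 1
    refine tendsto_of_tendsto_of_tendsto_of_le_of_le' hl tendsto_const_nhds ?_ ?_
    · filter_upwards [hpb, hp0.eventually_le_const (show (0 : ℝ) < 1 by norm_num)] with n a b
      have := one_add_mul_le_pow (a := -p n) (by linarith) ((k + 1) ^ 2 * n ^ (d - 1))
      rw [← sub_eq_add_neg] at this
      refine le_trans ?_ this
      push_cast
      have h5 := mul_le_mul_of_nonneg_left a.2 (show 0 ≤ ((k : ℝ) + 1) ^ 2 by positivity)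
      linarith
    · filter_upwards [hpb, hp0.eventually_le_const (show (0 : ℝ) < 1 by norm_num)] with n a b
      exact pow_le_one₀ (by linarith) (by linarith [a.1])
  -- expectation
  set κ : ℝ := 1 / ((2 : ℝ) ^ (k + 1) * (Nat.factorial (k + 1))) * ((Nat.factorial d) / (d + 1)) *
    Real.exp (-1) with hκ
  have hκ0 : 0 < κ := by positivity
  set m0 : ℕ → ℝ := fun n => κ * ((n : ℝ) ^ (j + 1) * Real.log n * Real.exp (-c n)) with hm0
  have hm0top : Tendsto m0 atTop atTop := h3.const_mul_atTop hκ0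
  have hm : ∀ᶠ n : ℕ in atTop, m0 n ≤ (n.choose (k + 1) : ℝ) *
      (p n * (1 - p n) ^ ((d + 1) * n.choose d)) := by
    filter_upwards [h1, hc1, hpb, hcp, hp0.eventually_le_const (show (0 : ℝ) < 1 / 2 by norm_num),
      eventually_ge_atTop (2 * (k + 1)), eventually_gt_atTop 0] with n b1 b2 b3 b4 b5 b6 b7
    have hn' : (0 : ℝ) < n := by exact_mod_cast b7
    have hN := NN_pos (d := d) b7
    have hq : 0 < 1 - p n := by linarith
    have g1 : ((n : ℝ) / 2) ^ (k + 1) / (Nat.factorial (k + 1)) ≤ (n.choose (k + 1) : ℝ) := by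
      rw [div_le_iff₀ (by positivity)]
      have := Nat.pow_le_choose (α := ℝ) (k + 1) n
      rw [div_le_iff₀ (by positivity)] at this
      have h6 : (n : ℝ) / 2 ≤ ((n + 1 - (k + 1) : ℕ) : ℝ) := by
        rw [Nat.cast_sub (by omega)]
        have : (2 * ((k : ℝ) + 1)) ≤ n := by exact_mod_cast b6
        push_cast; linarith
      calc _ ≤ ((n + 1 - (k + 1) : ℕ) : ℝ) ^ (k + 1) := pow_le_pow_left₀ (by positivity) h6 _
        _ ≤ _ := by exact_mod_cast this
    have g2 : Real.exp (-1) * Real.exp (-c n) ≤ (1 - p n) ^ ((d + 1) * n.choose d) := by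
      have hlogq := Real.one_sub_inv_le_log_of_pos hq
      have hexp : Real.exp (1 - (1 - p n)⁻¹) ≤ 1 - p n := by
        calc _ ≤ Real.exp (Real.log (1 - p n)) := Real.exp_le_exp.mpr hlogq
          _ = _ := Real.exp_log hq
      refine le_trans ?_ (pow_le_pow_left₀ (Real.exp_pos _).le hexp _)
      rw [← Real.exp_nat_mul, ← Real.exp_add]
      apply Real.exp_le_exp.mpr
      have hs := choose_upper d n
      set s : ℝ := (((d + 1) * n.choose d : ℕ) : ℝ)
      have e1 : 1 - (1 - p n)⁻¹ = -(p n / (1 - p n)) := by field_simp; ring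
      have hpn : 0 ≤ p n / (1 - p n) := div_nonneg b3.1.le hq.le
      have e2 : s * (p n / (1 - p n)) ≤ NN d n * (p n / (1 - p n)) := by gcongr
      have e3 : NN d n * (p n / (1 - p n)) = c n / (1 - p n) := by
        have : NN d n * p n = c n := by rw [hp]; simp only []; field_simp
        rw [← mul_div_assoc, this]
      have e4 : c n / (1 - p n) ≤ c n + 1 := by
        rw [div_le_iff₀ hq]; nlinarith
      rw [e1]
      linarith
    have g3 : Real.log n / NN d n ≤ p n := by
      rw [hp]; simp only []; gcongr
    have hln : 0 ≤ Real.log n := Real.log_natCast_nonneg n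
    calc m0 n = ((n : ℝ) / 2) ^ (k + 1) / (Nat.factorial (k + 1)) *
          (Real.log n / NN d n * (Real.exp (-1) * Real.exp (-c n))) := by
          rw [hm0]; simp only []; rw [hκ, NN, div_pow]
          have : (n : ℝ) ^ (k + 1) = n ^ d * n ^ (j + 1) := by rw [← pow_add, hdk]
          rw [this]
          push_cast
          field_simp
      _ ≤ _ := by
        apply mul_le_mul g1 _ (by positivity) (by positivity)
        exact mul_le_mul g3 g2 (by positivity) b3.1.le
  have hlow : Tendsto (fun n : ℕ => 2 * (1 - ((j : ℝ) + 2) * (1 - p n) ^ ((n - (k + 2)).choose d)) -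
      ((1 - p n) ^ ((k + 1) ^ 2 * n ^ (d - 1)))⁻¹ - 1 / m0 n) atTop (nhds 1) := by
    have a := ((hT1.const_mul ((j : ℝ) + 2)).const_sub 1).const_mul 2
    have b := hT2.inv₀ one_ne_zero
    have c' := hm0top.inv_tendsto_atTop
    have := (a.sub b).sub c'
    simp only [mul_zero, sub_zero, inv_one] at this
    norm_num at this
    simpa using this
  refine tendsto_of_tendsto_of_tendsto_of_le_of_le' hlow tendsto_const_nhds ?_
    (Eventually.of_forall fun n => measureReal_le_one)
  filter_upwards [hm, hpb, hp0.eventually_le_const (show (0 : ℝ) < 1 / 2 by norm_num),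
    hm0top.eventually_gt_atTop 0, eventually_ge_atTop (k + 2)] with n b1 b2 b3 b4 b5
  exact lower_fixed hj hjk b5 (p n) (m0 n) b2.1 (by linarith) b4 b1

lemma div_NN (d n : ℕ) (x : ℝ) :
    x * (Nat.factorial d) / (((d + 1 : ℕ) : ℝ) * (n : ℝ) ^ d) = x / NN d n := by
  rw [NN, div_div_eq_mul_div]

lemma exp_identity (j n : ℕ) (x : ℝ) (hn : 1 < n) :
    (n : ℝ) ^ (j + 1) * Real.log n *
      Real.exp (-((j + 1 : ℝ) * Real.log n + Real.log (Real.log n) + x)) = Real.exp (-x) := by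
  have hn' : (0 : ℝ) < n := by positivity
  have hl : 0 < Real.log n := Real.log_pos (by exact_mod_cast hn)
  have e1 : Real.exp ((j + 1 : ℝ) * Real.log n) = (n : ℝ) ^ (j + 1) := by
    have : ((j : ℝ) + 1) = ((j + 1 : ℕ) : ℝ) := by push_cast; ring
    rw [this, Real.exp_nat_mul, Real.exp_log hn']
  rw [neg_add, neg_add, Real.exp_add, Real.exp_add, Real.exp_neg ((j + 1 : ℝ) * Real.log n), e1,
    Real.exp_neg (Real.log (Real.log n)), Real.exp_log hl]
  field_simp

/-- Theorem 1.5(i): whp `p_{M_j}` lies between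
`((j+1)·log n + log log n ∓ ω)·(k-j)!/((k-j+1)·n^{k-j})`. -/
theorem statement0 (k j : ℕ) (hk : 2 ≤ k) (hj : 1 ≤ j) (hjk : j < k)
    (ω : ℕ → ℝ) (hω : Tendsto ω atTop atTop) :
    Tendsto (fun n : ℕ => birthMeasure n {t : Finset (Fin n) → ℝ |
      ((j + 1 : ℝ) * Real.log n + Real.log (Real.log n) - ω n) * (Nat.factorial (k - j)) /
          (((k - j + 1 : ℕ) : ℝ) * (n : ℝ) ^ (k - j)) < pMj k j n t ∧
        pMj k j n t <
          ((j + 1 : ℝ) * Real.log n + Real.log (Real.log n) + ω n) * (Nat.factorial (k - j)) /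
            (((k - j + 1 : ℕ) : ℝ) * (n : ℝ) ^ (k - j))})
      atTop (nhds 1) := by
  set d := k - j with hd
  have hlog : Tendsto (fun n : ℕ => Real.log n) atTop atTop :=
    Real.tendsto_log_atTop.comp tendsto_natCast_atTop_atTop
  have hloglog : Tendsto (fun n : ℕ => Real.log (Real.log n)) atTop atTop :=
    Real.tendsto_log_atTop.comp hlog
  set ν : ℕ → ℝ := fun n => min (ω n - 1) (Real.log (Real.log n)) with hν
  have hνtop : Tendsto ν atTop atTop := by
    have h1 : Tendsto (fun n => ω n - 1) atTop atTop := by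
      simpa [sub_eq_add_neg] using tendsto_atTop_add_const_right atTop (-1 : ℝ) hω
    rw [tendsto_atTop] at *
    intro b
    filter_upwards [h1 b, hloglog b] with n x y
    exact le_min x y
  set cm : ℕ → ℝ := fun n => (j + 1 : ℝ) * Real.log n + Real.log (Real.log n) + -ν n with hcm
  set cp : ℕ → ℝ := fun n => (j + 1 : ℝ) * Real.log n + Real.log (Real.log n) + ν n with hcp
  have hj0 : (0 : ℝ) ≤ j := by positivity
  have hbase : ∀ᶠ n : ℕ in atTop, 1 ≤ Real.log n ∧ 0 ≤ ν n ∧ ν n ≤ Real.log (Real.log n) ∧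
      Real.log (Real.log n) ≤ Real.log n ∧ ν n ≤ ω n - 1 ∧ 1 < n := by
    filter_upwards [hlog.eventually_ge_atTop 1, hνtop.eventually_ge_atTop 0,
      eventually_gt_atTop 1] with n a b e
    refine ⟨a, b, min_le_right _ _, ?_, min_le_left _ _, e⟩
    exact Real.log_le_self (by linarith)
  have hcm1 : ∀ᶠ n : ℕ in atTop, Real.log n ≤ cm n := by
    filter_upwards [hbase] with n ⟨a, b, c, d, e, f⟩
    simp only [hcm]; nlinarith
  have hcm2 : ∀ᶠ n : ℕ in atTop, cm n ≤ ((j : ℝ) + 3) * Real.log n := by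
    filter_upwards [hbase] with n ⟨a, b, c, d, e, f⟩
    simp only [hcm]; nlinarith
  have hcp1 : ∀ᶠ n : ℕ in atTop, 1 ≤ cp n := by
    filter_upwards [hbase] with n ⟨a, b, c, d, e, f⟩
    simp only [hcp]; nlinarith
  have hcp2 : ∀ᶠ n : ℕ in atTop, cp n ≤ ((j : ℝ) + 3) * Real.log n := by
    filter_upwards [hbase] with n ⟨a, b, c, d, e, f⟩
    simp only [hcp]; nlinarith
  have hlow := lower_asymp k j hj hjk cm _ hcm1 hcm2 (by
    have : Tendsto (fun n => Real.exp (ν n)) atTop atTop := Real.tendsto_exp_atTop.comp hνtop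
    refine this.congr' ?_
    filter_upwards [hbase] with n h
    have := exp_identity j n (-ν n) h.2.2.2.2.2
    rw [neg_neg] at this
    exact this.symm)
  have hup := upper_asymp k j hjk cp _ hcp1 hcp2 (by
    have : Tendsto (fun n => Real.exp (-ν n)) atTop (nhds 0) :=
      Real.tendsto_exp_neg_atTop_nhds_zero.comp hνtop
    refine this.congr' ?_
    filter_upwards [hbase] with n h
    exact (exp_identity j n (ν n) h.2.2.2.2.2).symm)
  rw [← hd] at hlow hup
  simp only [div_NN]
  rw [← ENNReal.tendsto_toReal_iff (fun n => measure_ne_top _ _) ENNReal.one_ne_top,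
    ENNReal.toReal_one]
  have hdiff := hlow.sub hup
  rw [sub_zero] at hdiff
  -- `cm / NN → 0`, so it is at most one eventually
  have hlog1 : ∀ᶠ n : ℕ in atTop, 1 ≤ cm n := by
    filter_upwards [hcm1, hbase] with n a b
    exact b.1.trans a
  have hsmall : ∀ᶠ n : ℕ in atTop, cm n / NN d n ≤ 1 := by
    have h0 := (c_tendsto cm _ hlog1 hcm2).const_mul (Nat.factorial d : ℝ)
    rw [mul_zero] at h0
    filter_upwards [h0.eventually_le_const (show (0 : ℝ) < 1 by norm_num), hlog1,
      eventually_gt_atTop 0] with n a b e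
    have hn' : (1 : ℝ) ≤ n := by exact_mod_cast e
    rw [div_le_one (NN_pos e)]
    have hf : (0 : ℝ) < Nat.factorial d := by positivity
    have h1 : (Nat.factorial d : ℝ) * cm n ≤ n := by
      rw [← mul_div_assoc, div_le_one (by positivity)] at a; exact a
    rw [NN, le_div_iff₀ hf]
    have h2 : (n : ℝ) ≤ n ^ d := le_self_pow₀ hn' (by omega)
    have h3 : (1 : ℝ) * n ^ d ≤ ((d + 1 : ℕ) : ℝ) * n ^ d := by
      gcongr; push_cast; linarith [show (0 : ℝ) ≤ d by positivity]
    linarith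
  refine tendsto_of_tendsto_of_tendsto_of_le_of_le' hdiff tendsto_const_nhds ?_
    (Eventually.of_forall fun n => measureReal_le_one)
  filter_upwards [hsmall, hlog1, hcp1, hbase] with n s1 s2 s3 s4
  obtain ⟨_, _, _, _, hνω, hn1⟩ := s4
  have hN : 0 < NN d n := NN_pos (by omega)
  rw [sub_le_iff_le_add]
  refine le_trans ?_ (measureReal_union_le _ _)
  refine measureReal_mono ?_ (measure_ne_top _ _)
  intro t ht
  by_cases hbad : t ∈ {t | ∃ p, cp n / NN d n ≤ p ∧ p ≤ 1 ∧ ∃ K C,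
      IsMjMinus (complexAt k n t p) k j K C}
  · exact Or.inr hbad
  refine Or.inl ⟨?_, ?_⟩
  · refine lt_of_lt_of_le (b := cm n / NN d n) ?_ ?_
    · apply div_lt_div_of_pos_right _ hN
      simp only [hcm]; linarith
    · refine le_csSup ⟨1, fun x hx => hx.1.2⟩ ⟨⟨?_, s1⟩, ht⟩
      exact div_nonneg (by linarith) hN.le
  · refine lt_of_le_of_lt (b := cp n / NN d n) ?_ ?_
    · refine Real.sSup_le ?_ (div_nonneg (by linarith) hN.le)
      rintro x ⟨⟨hx0, hx1⟩, K, C, J, hJ⟩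
      by_contra hlt
      exact hbad ⟨x, (not_le.mp hlt).le, hx1, K, C, hJ.1⟩
    · apply div_lt_div_of_pos_right _ hN
      simp only [hcp]; linarith

end RSC
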